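/- Let k be a field of characteristic zero and (A, 𝔪) a finite-dimensional local k-algebra with residue field A/𝔪 = k whose socle soc(A) = {a ∈ A : a·𝔪 = 0} has k-dimension 1 (i.e. A is a finite local Gorenstein k-algebra). Then there exist n ≥ 0 and a polynomial f ∈ k[x₁,…,xₙ] such that A is isomorphic as a k-algebra to the apolar algebra k[y₁,…,yₙ]/Ann(f). -/

import Mathlib

/-- The apolarity action of `T = k[y₁,…,yₙ]` on `S = k[x₁,…,xₙ]`, in which `yᵢ` acts as
`∂/∂xᵢ`: a polynomial `D = Σ_a c_a y^a` acts as the constant-coefficient differential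
operator `Σ_a c_a ∂^a`. -/
noncomputable def apolar {k : Type*} [CommSemiring k] {n : ℕ}
    (D f : MvPolynomial (Fin n) k) : MvPolynomial (Fin n) k :=
  ∑ a ∈ D.support, ∑ b ∈ f.support,
    MvPolynomial.monomial (b - a)
      (D.coeff a * f.coeff b * ∏ i : Fin n, ((b i).descFactorial (a i) : k))

/-!
Pairing `D` with `f` by evaluating `D ∘ f` at the origin identifies the polynomials `f`, in
characteristic zero, with the functionals on `k[y₁,…,yₙ]` that vanish on all but finitely many
monomials, and `Ann(f)` is the largest ideal contained in the kernel of the functional of `f`.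

A surjection `k[y₁,…,yₙ] → A` sending the variables into the nilpotent ideal `𝔪` kills all but
finitely many monomials, so every functional `φ` on `A` pulls back to the functional of some `f`.
Then `Ann(f)` is the preimage of the largest ideal of `A` contained in `ker φ`. Every nonzero ideal
of `A` meets the socle, so this largest ideal is zero as soon as `φ` does not vanish on the socle
line.
-/

section Apolarity

open MvPolynomial

section CommSemiring

variable {k : Type*} [CommSemiring k] {n : ℕ}

theorem coeff_apolar (D f : MvPolynomial (Fin n) k) (c : Fin n →₀ ℕ) :
    (apolar D f).coeff c = ∑ a ∈ D.support, D.coeff a * f.coeff (a + c) *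
      ∏ i, (((a + c) i).descFactorial (a i) : k) := by
  classical
  simp only [apolar, coeff_sum, coeff_monomial]
  refine Finset.sum_congr rfl fun a _ => ?_
  rw [Finset.sum_eq_single (a + c)]
  · rw [if_pos (add_tsub_cancel_left a c)]
  · intro b _ hb
    refine ite_eq_right_iff.mpr fun hbc => ?_
    obtain ⟨i, hi⟩ : ∃ i, b i < a i := by
      by_contra! hab
      exact hb (by rw [← hbc, add_tsub_cancel_of_le hab])
    have hdesc : ((b i).descFactorial (a i) : k) = 0 := by
      rw [Nat.descFactorial_of_lt hi, Nat.cast_zero]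
    rw [Finset.prod_eq_zero (Finset.mem_univ i) hdesc, mul_zero]
  · intro hac
    rw [notMem_support_iff.mp hac, mul_zero, zero_mul, ite_self]

/-- The functional `D ↦ (D ∘ f)(0)` on `k[y₁,…,yₙ]`, which turns statements about `Ann(f)` into
linear algebra. It is encoded by its values on monomials: `y^a` takes the value `a!` times the
coefficient of `x^a` in `f`. -/
noncomputable def apolarPairing (f : MvPolynomial (Fin n) k) :
    MvPolynomial (Fin n) k →ₗ[k] k :=
  (basisMonomials (Fin n) k).constr k fun a => f.coeff a * ∏ i, ((a i).factorial : k)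

theorem apolarPairing_monomial (f : MvPolynomial (Fin n) k) (a : Fin n →₀ ℕ) (r : k) :
    apolarPairing f (monomial a r) = r * (f.coeff a * ∏ i, ((a i).factorial : k)) := by
  have hbasis : monomial a r = r • basisMonomials (Fin n) k a := by
    rw [coe_basisMonomials, smul_monomial, smul_eq_mul, mul_one]
  rw [hbasis, map_smul, apolarPairing, Module.Basis.constr_basis, smul_eq_mul]

theorem coeff_apolar_mul_prod_factorial (D f : MvPolynomial (Fin n) k) (c : Fin n →₀ ℕ) :
    (apolar D f).coeff c * ∏ i, ((c i).factorial : k) = apolarPairing f (D * monomial c 1) := by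
  have hfactorial (a : Fin n →₀ ℕ) :
      (∏ i, (((a + c) i).descFactorial (a i) : k)) * ∏ i, ((c i).factorial : k) =
        ∏ i, (((a + c) i).factorial : k) := by
    rw [← Finset.prod_mul_distrib]
    refine Finset.prod_congr rfl fun i _ => ?_
    rw [← Nat.cast_mul, Finsupp.add_apply, mul_comm,
      ← Nat.factorial_mul_descFactorial (Nat.le_add_right (a i) (c i)), Nat.add_sub_cancel_left]
  conv_rhs => rw [D.as_sum, Finset.sum_mul, map_sum]
  rw [coeff_apolar, Finset.sum_mul]
  refine Finset.sum_congr rfl fun a _ => ?_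
  rw [monomial_mul, mul_one, apolarPairing_monomial, mul_assoc, hfactorial, mul_assoc]

theorem prod_factorial_ne_zero [NoZeroDivisors k] [CharZero k] {σ : Type*} [Fintype σ]
    (a : σ → ℕ) : ∏ i, ((a i).factorial : k) ≠ 0 :=
  Finset.prod_ne_zero_iff.mpr fun i _ => Nat.cast_ne_zero.mpr (Nat.factorial_ne_zero (a i))

theorem apolar_eq_zero_iff [NoZeroDivisors k] [CharZero k] {D f : MvPolynomial (Fin n) k} :
    apolar D f = 0 ↔ ∀ E, apolarPairing f (D * E) = 0 := by
  constructor
  · intro hD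
    suffices apolarPairing f ∘ₗ LinearMap.mulLeft k D = 0 from LinearMap.congr_fun this
    refine (basisMonomials (Fin n) k).ext fun c => ?_
    rw [coe_basisMonomials, LinearMap.comp_apply, LinearMap.mulLeft_apply,
      ← coeff_apolar_mul_prod_factorial, hD, coeff_zero, zero_mul, LinearMap.zero_apply]
  · intro hD
    ext c
    have hc := (coeff_apolar_mul_prod_factorial D f c).trans (hD _)
    exact (mul_eq_zero.mp hc).resolve_right (prod_factorial_ne_zero c)

end CommSemiring

theorem exists_apolarPairing_eq {k : Type*} [Field k] [CharZero k] {n : ℕ}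
    (ψ : MvPolynomial (Fin n) k →ₗ[k] k) (hψ : {a | ψ (monomial a 1) ≠ 0}.Finite) :
    ∃ f, apolarPairing f = ψ := by
  classical
  let f : MvPolynomial (Fin n) k :=
    ∑ a ∈ hψ.toFinset, monomial a (ψ (monomial a 1) / ∏ i, ((a i).factorial : k))
  have hf (a : Fin n →₀ ℕ) : f.coeff a = ψ (monomial a 1) / ∏ i, ((a i).factorial : k) := by
    simp only [f, coeff_sum, coeff_monomial, Finset.sum_ite_eq', Set.Finite.mem_toFinset]
    refine ite_eq_left_iff.mpr fun ha => ?_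
    rw [not_not.mp ha, zero_div]
  refine ⟨f, (basisMonomials (Fin n) k).ext fun a => ?_⟩
  rw [coe_basisMonomials, apolarPairing_monomial, hf, one_mul,
    div_mul_cancel₀ _ (prod_factorial_ne_zero a)]

theorem finite_setOf_aeval_monomial_ne_zero {R A σ : Type*} [CommSemiring R] [CommSemiring A]
    [Algebra R A] [Finite σ] {v : σ → A} (hv : ∀ i, IsNilpotent (v i)) :
    {a | aeval v (monomial a (1 : R)) ≠ 0}.Finite := by
  classical
  have := Fintype.ofFinite σ
  choose N hN using hv
  refine (Set.finite_Iic (Finsupp.equivFunOnFinite.symm N)).subset fun a ha i => ?_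
  by_contra! hi
  refine ha ?_
  have hvi : v i ^ a i = 0 := pow_eq_zero_of_le hi.le (hN i)
  rw [aeval_monomial, Finsupp.prod_fintype _ _ fun i => pow_zero (v i),
    Finset.prod_eq_zero (Finset.mem_univ i) hvi, mul_zero]

theorem exists_apolar_eq_zero_iff_aeval_eq_zero {k A : Type*} [Field k] [CharZero k]
    [CommSemiring A] [Algebra k A] {n : ℕ} {v : Fin n → A} (hv : ∀ i, IsNilpotent (v i))
    (hsurj : Function.Surjective (aeval v : MvPolynomial (Fin n) k →ₐ[k] A)) {φ : A →ₗ[k] k}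
    (hφ : ((LinearMap.mul k A).compr₂ φ).SeparatingLeft) :
    ∃ f : MvPolynomial (Fin n) k, ∀ D, apolar D f = 0 ↔ aeval v D = 0 := by
  obtain ⟨f, hf⟩ := exists_apolarPairing_eq (φ ∘ₗ (aeval v).toLinearMap) <|
    (finite_setOf_aeval_monomial_ne_zero hv).subset fun a ha h0 => ha <| by
      rw [LinearMap.comp_apply, AlgHom.toLinearMap_apply, h0, map_zero]
  have hpairing (D E : MvPolynomial (Fin n) k) :
      apolarPairing f (D * E) = φ (aeval v D * aeval v E) := by
    rw [hf, LinearMap.comp_apply, AlgHom.toLinearMap_apply, map_mul]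
  refine ⟨f, fun D => ?_⟩
  simp only [apolar_eq_zero_iff, hpairing]
  rw [← hsurj.forall (p := fun y => φ (aeval v D * y) = 0)]
  refine ⟨hφ _, fun hD y => ?_⟩
  rw [hD, zero_mul, map_zero]

end Apolarity

section LocalAlgebra

theorem exists_smul_ne_zero_and_mem_torsionBySet {R M : Type*} [CommSemiring R] [AddCommMonoid M]
    [Module R M] {I : Ideal R} (hI : IsNilpotent I) {x : M} (hx : x ≠ 0) :
    ∃ r : R, r • x ≠ 0 ∧ r • x ∈ Submodule.torsionBySet R M I := by
  classical
  have hkill : ∃ j, ∀ r ∈ I ^ j, r • x = 0 := by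
    obtain ⟨N, hN⟩ := hI
    refine ⟨N, fun r hr => ?_⟩
    rw [hN, Ideal.zero_eq_bot, Ideal.mem_bot] at hr
    rw [hr, zero_smul]
  -- The least power of `I` killing `x` is positive, and the preceding power moves `x` into the
  -- socle.
  obtain ⟨j, hj⟩ : ∃ j, Nat.find hkill = j + 1 := by
    refine Nat.exists_eq_succ_of_ne_zero fun h0 => hx ?_
    rw [← one_smul R x]
    exact (Nat.find_eq_zero hkill).mp h0 1 (by rw [pow_zero, Ideal.one_eq_top]; trivial)
  obtain ⟨r, hr, hrx⟩ : ∃ r ∈ I ^ j, r • x ≠ 0 := by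
    simpa only [not_forall, exists_prop] using Nat.find_min hkill (hj ▸ Nat.lt_succ_self j)
  refine ⟨r, hrx, (Submodule.mem_torsionBySet_iff _ _).mpr fun z => ?_⟩
  rw [smul_smul]
  refine Nat.find_spec hkill _ ?_
  rw [hj, pow_succ']
  exact Ideal.mul_mem_mul z.2 hr

theorem exists_separatingLeft_mul_compr₂ {k A : Type*} [Field k] [CommRing A] [Algebra k A]
    {I : Ideal A} (hI : IsNilpotent I)
    (hsoc : Module.finrank k ((Submodule.torsionBySet A A (I : Set A)).restrictScalars k) = 1) :
    ∃ φ : A →ₗ[k] k, ((LinearMap.mul k A).compr₂ φ).SeparatingLeft := by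
  obtain ⟨s, hs0, hs⟩ := finrank_eq_one_iff'.mp hsoc
  obtain ⟨φ, hφs⟩ := Module.Projective.exists_dual_ne_zero k (Subtype.coe_ne_coe.mpr hs0)
  refine ⟨φ, fun x hx => by_contra fun hx0 => ?_⟩
  obtain ⟨y, hyx0, hyx⟩ := exists_smul_ne_zero_and_mem_torsionBySet hI hx0
  obtain ⟨c, hc⟩ := hs ⟨y • x, hyx⟩
  have hcs : c • (s : A) = y • x := congrArg Subtype.val hc
  have hc0 : c ≠ 0 := by
    rintro rfl
    exact hyx0 (by rw [← hcs, zero_smul])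
  have hφyx : φ (y • x) = 0 := by
    rw [smul_eq_mul, mul_comm]
    exact hx y
  rw [← hcs, map_smul] at hφyx
  exact smul_ne_zero hc0 hφs hφyx

theorem subalgebra_eq_top_of_ideal_subset {R A : Type*} [CommRing R] [CommRing A] [Algebra R A]
    {I : Ideal A} (hres : Function.Surjective (algebraMap R (A ⧸ I))) {S : Subalgebra R A}
    (hS : (I : Set A) ⊆ S) : S = ⊤ := by
  refine Algebra.eq_top_iff.mpr fun x => ?_
  obtain ⟨r, hr⟩ := hres (Ideal.Quotient.mk I x)
  have hxr : x - algebraMap R A r ∈ I := Ideal.Quotient.eq.mp hr.symm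
  simpa only [sub_add_cancel] using S.add_mem (hS hxr) (S.algebraMap_mem r)

theorem exists_aeval_surjective_of_ideal {R A : Type*} [CommRing R] [CommRing A] [Algebra R A]
    {I : Ideal A} (hres : Function.Surjective (algebraMap R (A ⧸ I)))
    (hI : (I.restrictScalars R).FG) :
    ∃ (n : ℕ) (v : Fin n → A), (∀ i, v i ∈ I) ∧
      Function.Surjective (MvPolynomial.aeval v : MvPolynomial (Fin n) R →ₐ[R] A) := by
  obtain ⟨n, v, hv⟩ := Submodule.fg_iff_exists_fin_generating_family.mp hI
  refine ⟨n, v, fun i => ?_, ?_⟩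
  · exact hv.le (Submodule.subset_span (Set.mem_range_self i))
  · rw [← AlgHom.range_eq_top, ← Algebra.adjoin_range_eq_range_aeval]
    exact subalgebra_eq_top_of_ideal_subset hres fun x hx =>
      Algebra.span_le_adjoin R _ (hv.ge hx)

end LocalAlgebra

/-- Let `k` be a field of characteristic zero and `(A, 𝔪)` a
finite-dimensional local `k`-algebra with residue field `A/𝔪 = k` whose socle
`soc(A) = {a ∈ A : a·𝔪 = 0}` has `k`-dimension `1` (a finite local Gorenstein
`k`-algebra). Then there exist `n ≥ 0` and a polynomial `f ∈ k[x₁,…,xₙ]` such that `A` is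
isomorphic as a `k`-algebra to the apolar algebra `k[y₁,…,yₙ]/Ann(f)`. -/
theorem deformations_stmt9 {k A : Type*} [Field k] [CharZero k]
    [CommRing A] [Algebra k A] [IsLocalRing A] [FiniteDimensional k A]
    -- the residue field A/𝔪 is k
    (hres : Function.Bijective (algebraMap k (IsLocalRing.ResidueField A)))
    -- the socle has k-dimension 1
    (hsoc : Module.finrank k
      ↥((Submodule.torsionBySet A A
          ((IsLocalRing.maximalIdeal A : Ideal A) : Set A)).restrictScalars k) = 1) :
    ∃ (n : ℕ) (f : MvPolynomial (Fin n) k) (I : Ideal (MvPolynomial (Fin n) k)),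
      (I : Set (MvPolynomial (Fin n) k)) = {D | apolar D f = 0} ∧
      Nonempty ((MvPolynomial (Fin n) k ⧸ I) ≃ₐ[k] A) := by
  have hart : IsArtinianRing A := IsArtinianRing.of_finite k A
  have hnil : IsNilpotent (IsLocalRing.maximalIdeal A) :=
    (isArtinianRing_iff_isNilpotent_maximalIdeal A).mp hart
  obtain ⟨φ, hφ⟩ := exists_separatingLeft_mul_compr₂ hnil hsoc
  obtain ⟨n, v, hv, hsurj⟩ := exists_aeval_surjective_of_ideal hres.surjective
    (IsNoetherian.noetherian _)
  have hvnil (i : Fin n) : IsNilpotent (v i) :=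
    hnil.imp fun N hN => by simpa [hN] using Ideal.pow_mem_pow (hv i) N
  obtain ⟨f, hf⟩ := exists_apolar_eq_zero_iff_aeval_eq_zero hvnil hsurj hφ
  exact ⟨n, f, RingHom.ker (MvPolynomial.aeval v), Set.ext fun D => (hf D).symm,
    ⟨Ideal.quotientKerAlgEquivOfSurjective hsurj⟩⟩
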